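/- Fractional Maz'ya–Poincaré inequality: let 1 ≤ p < ∞, 0 < s < 1, x_0 ∈ R^N, 0 < r < R, and Σ ⊆ closure(B_r(x_0)) compact. There exists M = M(N, p, R/r) > 0 such that for every u ∈ C^∞_0(R^N) with u ≡ 0 on Σ, (M/r^{N/p}) · cap_{s,p}(Σ; B_R(x_0))^{1/p} · ‖u‖_{L^p(B_r(x_0))} ≤ (∬_{B_R(x_0)×R^N} |u(x)−u(y)|^p/|x−y|^{N+sp} dx dy)^{1/p}. -/

import Mathlib

open MeasureTheory Metric Filter
open scoped ENNReal

noncomputable section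

abbrev Euc (N : ℕ) := EuclideanSpace ℝ (Fin N)

/-- The (p-th power of the) Gagliardo–Slobodeckii seminorm on `ℝ^N`. -/
def gag (N : ℕ) (p s : ℝ) (u : Euc N → ℝ) : ℝ :=
  ∫ z : Euc N × Euc N, |u z.1 - u z.2| ^ p / ‖z.1 - z.2‖ ^ ((N : ℝ) + s * p)

/-- `u ∈ C^∞_0(Ω)`: smooth with compact support contained in `Ω`. -/
def TestOn {N : ℕ} (Ω : Set (Euc N)) (u : Euc N → ℝ) : Prop :=
  ContDiff ℝ (⊤ : ℕ∞) u ∧ HasCompactSupport u ∧ tsupport u ⊆ Ω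

/-- The fractional principal frequency `λ^s_{p,q}(Ω)`. -/
def lam (N : ℕ) (p q s : ℝ) (Ω : Set (Euc N)) : ℝ :=
  sInf { c | ∃ u : Euc N → ℝ, TestOn Ω u ∧ (∫ x in Ω, |u x| ^ q) = 1 ∧ c = gag N p s u }

/-- The homogeneous relative `(s,p)`-capacity of `A` in `E`. -/
def fcap (N : ℕ) (p s : ℝ) (A E : Set (Euc N)) : ℝ :=
  sInf { c | ∃ φ : Euc N → ℝ, TestOn E φ ∧ (∀ x ∈ A, 1 ≤ φ x) ∧ c = gag N p s φ }

/-- The fractional `s`-perimeter of a set `A ⊆ ℝ^N`. -/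
def sPer (N : ℕ) (s : ℝ) (A : Set (Euc N)) : ℝ :=
  ∫ z : Euc N × Euc N,
    |A.indicator (fun _ => (1 : ℝ)) z.1 - A.indicator (fun _ => (1 : ℝ)) z.2| /
      ‖z.1 - z.2‖ ^ ((N : ℝ) + s)

/-- An open set with smooth boundary, described as a regular sublevel set of a smooth function. -/
def SmoothBdry {N : ℕ} (O : Set (Euc N)) : Prop :=
  ∃ f : Euc N → ℝ, ContDiff ℝ (⊤ : ℕ∞) f ∧ O = {x | f x < 0} ∧ ∀ x, f x = 0 → fderiv ℝ f x ≠ 0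

/-- The sharp constant in the fractional Sobolev inequality. -/
def sobConst (N : ℕ) (p s : ℝ) : ℝ :=
  sSup {c | ∃ u : Euc N → ℝ, TestOn Set.univ u ∧ gag N p s u = 1 ∧
    c = (∫ x, |u x| ^ ((N : ℝ) * p / (N - s * p))) ^ (((N : ℝ) - s * p) / N)}

/-- Membership in `W̃^{s,p}_0(Ω)`, the closure of `C^∞_0(Ω)` in `W^{s,p}(ℝ^N)`. -/
def MemW0 (N : ℕ) (p s : ℝ) (Ω : Set (Euc N)) (V : Euc N → ℝ) : Prop :=
  ∃ u : ℕ → Euc N → ℝ, (∀ n, TestOn Ω (u n)) ∧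
    Filter.Tendsto (fun n => (∫ x, |u n x - V x| ^ p) + gag N p s (fun x => u n x - V x))
      Filter.atTop (nhds 0)

/-- The relative (local) `p`-capacity of `A` in `E`. -/
def pcap (N : ℕ) (p : ℝ) (A E : Set (Euc N)) : ℝ :=
  sInf { c | ∃ φ : Euc N → ℝ, TestOn E φ ∧ (∀ x ∈ A, 1 ≤ φ x) ∧
    c = ∫ x in E, ‖fderiv ℝ φ x‖ ^ p }

/-- The sharp constant in the local `p`-Poincaré inequality on `E`. -/
def lamLoc (N : ℕ) (p : ℝ) (E : Set (Euc N)) : ℝ :=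
  sInf { c | ∃ u : Euc N → ℝ, TestOn E u ∧ (∫ x in E, |u x| ^ p) = 1 ∧
    c = ∫ x in E, ‖fderiv ℝ u x‖ ^ p }

/-- The compact set `A ⊆ closure (B_r(x0))` is `(s,p,γ)`-negligible. -/
def Negligible (N : ℕ) (p s γ : ℝ) (x0 : Euc N) (r : ℝ) (A : Set (Euc N)) : Prop :=
  fcap N p s A (ball x0 (2 * r)) ≤ γ * fcap N p s (closedBall x0 r) (ball x0 (2 * r))

/-- The fractional `(p,γ)`-capacitary inradius of order `s` of `Ω` (valued in `ℝ≥0∞`). -/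
def capInr (N : ℕ) (p s γ : ℝ) (Ω : Set (Euc N)) : ℝ≥0∞ :=
  sSup {R | ∃ r : ℝ, 0 < r ∧ R = ENNReal.ofReal r ∧
    ∃ x0 : Euc N, Negligible N p s γ x0 r (closedBall x0 r \ Ω)}

end


noncomputable section helpers

def ee (p a : ℝ) : ℝ≥0∞ := ENNReal.ofReal (|a| ^ p)

def ww {N : ℕ} (q : ℝ) (h : Euc N) : ℝ≥0∞ := ENNReal.ofReal (‖h‖ ^ (-q))

lemma ee_add (p : ℝ) (hp : 1 ≤ p) (a b : ℝ) :
    ee p (a + b) ≤ ENNReal.ofReal (2 ^ (p - 1)) * (ee p a + ee p b) := by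
  have key : ∀ c : ℝ, ee p c = (ENNReal.ofReal |c|) ^ p := fun c => by
    rw [ee, ENNReal.ofReal_rpow_of_nonneg (abs_nonneg _) (by linarith)]
  rw [key, key, key, ← ENNReal.ofReal_rpow_of_pos (by norm_num)]
  have h2 : ENNReal.ofReal 2 = 2 := by simp
  rw [h2]
  refine le_trans ?_ (ENNReal.rpow_add_le_mul_rpow_add_rpow _ _ hp)
  refine ENNReal.rpow_le_rpow ?_ (by linarith)
  rw [← ENNReal.ofReal_add (abs_nonneg _) (abs_nonneg _)]
  exact ENNReal.ofReal_le_ofReal (abs_add_le a b)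

lemma ee_neg (p a : ℝ) : ee p (-a) = ee p a := by simp [ee]

lemma ee_sub_comm (p a b : ℝ) : ee p (a - b) = ee p (b - a) := by
  rw [← ee_neg, neg_sub]

lemma ee_mul (p a b : ℝ) : ee p (a * b) = ee p a * ee p b := by
  simp only [ee]
  rw [abs_mul, Real.mul_rpow (abs_nonneg _) (abs_nonneg _), ENNReal.ofReal_mul (by positivity)]

lemma ee_zero (p : ℝ) (hp : 1 ≤ p) : ee p 0 = 0 := by
  simp [ee, Real.zero_rpow (by linarith : p ≠ 0)]

lemma ee_mono (p : ℝ) (hp : 1 ≤ p) {a b : ℝ} (h : |a| ≤ |b|) : ee p a ≤ ee p b :=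
  ENNReal.ofReal_le_ofReal (Real.rpow_le_rpow (abs_nonneg _) h (by linarith))

lemma ee_one (p : ℝ) : ee p 1 = 1 := by simp [ee]

lemma ee_measurable (p : ℝ) : Measurable (ee p) := by
  unfold ee; fun_prop

lemma ww_measurable {N : ℕ} (q : ℝ) : Measurable (ww q : Euc N → ℝ≥0∞) := by
  unfold ww; fun_prop

lemma ww_neg {N : ℕ} (q : ℝ) (h : Euc N) : ww q (-h) = ww q h := by simp [ww]

lemma ww_sub_comm {N : ℕ} (q : ℝ) (h k : Euc N) : ww q (h - k) = ww q (k - h) := by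
  rw [← ww_neg, neg_sub]

lemma radial (N : ℕ) (hN : 0 < N) (f : ℝ → ℝ) (hf : ∀ x, 0 ≤ f x)
    (hi : IntegrableOn (fun y : ℝ => y ^ (N - 1) * f y) (Set.Ioi 0)) :
    ∫⁻ x : Euc N, ENNReal.ofReal (f ‖x‖) =
      ENNReal.ofReal (N * volume.real (ball (0 : Euc N) 1) *
        ∫ y in Set.Ioi (0 : ℝ), y ^ (N - 1) * f y) := by
  have : Nontrivial (Euc N) := by
    have : Nonempty (Fin N) := ⟨⟨0, hN⟩⟩
    infer_instance
  have h1 : Integrable (fun x : Euc N => f ‖x‖) := by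
    rw [integrable_fun_norm_addHaar (volume : Measure (Euc N)) (f := f)]
    simpa using hi
  rw [← ofReal_integral_eq_lintegral_ofReal h1 (Eventually.of_forall fun x => hf _),
    integral_fun_norm_addHaar (volume : Measure (Euc N)) f]
  simp [mul_assoc]

lemma tail_int (N : ℕ) (hN : 0 < N) (a ρ : ℝ) (ha : 0 < a) (hρ : 0 < ρ) :
    ∫⁻ h in (ball (0 : Euc N) ρ)ᶜ, ww ((N : ℝ) + a) h =
      ENNReal.ofReal (N * volume.real (ball (0 : Euc N) 1) * (ρ ^ (-a) / a)) := by
  have e1 : ∀ y ∈ Set.Ioi (0:ℝ), y ^ (N - 1) * (Set.Ici ρ).indicator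
      (fun y : ℝ => y ^ (-((N:ℝ) + a))) y = (Set.Ici ρ).indicator (fun y : ℝ => y ^ (-a - 1)) y := by
    intro y hy
    have hy : 0 < y := hy
    by_cases h : y ∈ Set.Ici ρ
    · simp only [Set.indicator_of_mem h]
      rw [← Real.rpow_natCast, ← Real.rpow_add hy, Nat.cast_sub hN]
      congr 1; push_cast; ring
    · simp only [Set.indicator_of_notMem h, mul_zero]
  have hsub : Set.Ioi (0:ℝ) ∩ Set.Ici ρ = Set.Ici ρ := by
    apply Set.inter_eq_right.2
    intro y hy; exact lt_of_lt_of_le hρ hy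
  have hI : IntegrableOn (fun y : ℝ => y ^ (-a - 1)) (Set.Ici ρ) := by
    rw [integrableOn_Ici_iff_integrableOn_Ioi]
    exact integrableOn_Ioi_rpow_of_lt (by linarith) hρ
  have := radial N hN ((Set.Ici ρ).indicator (fun y : ℝ => y ^ (-((N:ℝ) + a)))) ?_ ?_
  · rw [← lintegral_indicator measurableSet_ball.compl]
    convert this using 1
    · refine lintegral_congr fun x => ?_
      by_cases h : ‖x‖ < ρ
      · rw [Set.indicator_of_notMem, Set.indicator_of_notMem] <;> simp [h]
      · rw [Set.indicator_of_mem, Set.indicator_of_mem]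
        · rfl
        · simpa using h
        · simpa using h
    · rw [setIntegral_congr_fun measurableSet_Ioi e1, setIntegral_indicator measurableSet_Ici, hsub,
        integral_Ici_eq_integral_Ioi, integral_Ioi_rpow_of_lt (by linarith) hρ]
      congr 2
      have : -a - 1 + 1 = -a := by ring
      rw [this, neg_div_neg_eq]
  · intro x
    by_cases h : x ∈ Set.Ici ρ
    · rw [Set.indicator_of_mem h]
      exact Real.rpow_nonneg (hρ.le.trans h) _
    · rw [Set.indicator_of_notMem h]
  · rw [integrableOn_congr_fun e1 measurableSet_Ioi]
    exact ((integrable_indicator_iff measurableSet_Ici).2 hI).integrableOn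

lemma near_int (N : ℕ) (hN : 0 < N) (b ρ : ℝ) (hb : 0 < b) (hρ : 0 < ρ) :
    ∫⁻ h in ball (0 : Euc N) ρ, ENNReal.ofReal (‖h‖ ^ (b - N)) =
      ENNReal.ofReal (N * volume.real (ball (0 : Euc N) 1) * (ρ ^ b / b)) := by
  have e1 : ∀ y ∈ Set.Ioi (0:ℝ), y ^ (N - 1) * (Set.Ico 0 ρ).indicator
      (fun y : ℝ => y ^ (b - N)) y = (Set.Ico 0 ρ).indicator (fun y : ℝ => y ^ (b - 1)) y := by
    intro y hy
    have hy : 0 < y := hy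
    by_cases h : y ∈ Set.Ico 0 ρ
    · simp only [Set.indicator_of_mem h]
      rw [← Real.rpow_natCast, ← Real.rpow_add hy, Nat.cast_sub hN]
      congr 1; push_cast; ring
    · simp only [Set.indicator_of_notMem h, mul_zero]
  have hsub : Set.Ioi (0:ℝ) ∩ Set.Ico 0 ρ = Set.Ioo 0 ρ := by
    ext y; simp; grind
  have hI : IntegrableOn (fun y : ℝ => y ^ (b - 1)) (Set.Ioo 0 ρ) := by
    rw [intervalIntegral.integrableOn_Ioo_rpow_iff hρ]; linarith
  have := radial N hN ((Set.Ico 0 ρ).indicator (fun y : ℝ => y ^ (b - (N:ℝ)))) ?_ ?_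
  · rw [← lintegral_indicator measurableSet_ball]
    convert this using 1
    · refine lintegral_congr fun x => ?_
      by_cases h : ‖x‖ < ρ
      · rw [Set.indicator_of_mem, Set.indicator_of_mem]
        · simpa using h
        · simpa using h
      · rw [Set.indicator_of_notMem, Set.indicator_of_notMem] <;> simp [h]
    · rw [setIntegral_congr_fun measurableSet_Ioi e1, setIntegral_indicator measurableSet_Ico, hsub,
        ← integral_Ioc_eq_integral_Ioo, ← intervalIntegral.integral_of_le hρ.le,
        integral_rpow (Or.inl (by linarith))]
      congr 2
      have : b - 1 + 1 = b := by ring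
      rw [this, Real.zero_rpow hb.ne', sub_zero]
  · intro x
    by_cases h : x ∈ Set.Ico 0 ρ
    · rw [Set.indicator_of_mem h]
      exact Real.rpow_nonneg h.1 _
    · rw [Set.indicator_of_notMem h]
  · rw [integrableOn_congr_fun e1 measurableSet_Ioi, IntegrableOn,
      integrable_indicator_iff measurableSet_Ico, IntegrableOn,
      Measure.restrict_restrict measurableSet_Ico, Set.inter_comm, hsub]
    exact hI

lemma kernel_bound (N : ℕ) (hN : 0 < N) (p s : ℝ) (hp : 1 ≤ p) (hs : 0 < s) (hs1 : s < 1)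
    (f : Euc N → ℝ) (b L ρ : ℝ) (hb : 0 ≤ b) (hL : 0 ≤ L) (hρ : 0 < ρ)
    (h1 : ∀ x y, |f x - f y| ≤ b) (h2 : ∀ x y, |f x - f y| ≤ L * ‖x - y‖) (x : Euc N) :
    ∫⁻ y, ee p (f x - f y) * ww ((N:ℝ) + s * p) (x - y) ≤
      ENNReal.ofReal (L ^ p * (N * volume.real (ball (0 : Euc N) 1) *
          (ρ ^ (p - s * p) / (p - s * p)))) +
      ENNReal.ofReal (b ^ p * (N * volume.real (ball (0 : Euc N) 1) *
          (ρ ^ (-(s * p)) / (s * p)))) := by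
  have hsp : 0 < s * p := by positivity
  have hpsp : 0 < p - s * p := by nlinarith
  set Φ : Euc N → ℝ≥0∞ := fun h =>
    (ball (0 : Euc N) ρ).indicator (fun h => ENNReal.ofReal (L ^ p) *
      ENNReal.ofReal (‖h‖ ^ ((p - s * p) - N))) h +
    ((ball (0 : Euc N) ρ)ᶜ).indicator (fun h => ENNReal.ofReal (b ^ p) * ww ((N:ℝ) + s * p) h) h
    with hΦ
  have hle : ∀ y, ee p (f x - f y) * ww ((N:ℝ) + s * p) (x - y) ≤ Φ (x - y) := by
    intro y
    by_cases h : x - y ∈ ball (0 : Euc N) ρ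
    · refine le_trans ?_ le_self_add
      rw [Set.indicator_of_mem h]
      unfold ee ww
      rw [← ENNReal.ofReal_mul (by positivity), ← ENNReal.ofReal_mul (by positivity)]
      refine ENNReal.ofReal_le_ofReal ?_
      rcases eq_or_ne (x - y) 0 with h0 | h0
      · have : x = y := sub_eq_zero.1 h0
        subst this
        simp only [sub_self, abs_zero]
        rw [Real.zero_rpow (by linarith), zero_mul]
        positivity
      · have hpos : 0 < ‖x - y‖ := norm_pos_iff.2 h0
        have e : ‖x - y‖ ^ ((p - s * p) - N) = ‖x - y‖ ^ p * ‖x - y‖ ^ (-((N:ℝ) + s * p)) := by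
          rw [← Real.rpow_add hpos]; congr 1; ring
        rw [e, ← mul_assoc, ← Real.mul_rpow hL hpos.le]
        gcongr
        exact h2 x y
    · refine le_trans ?_ le_add_self
      rw [Set.indicator_of_mem (by exact h)]
      gcongr
      exact ENNReal.ofReal_le_ofReal (Real.rpow_le_rpow (abs_nonneg _) (h1 x y) (by linarith))
  refine (lintegral_mono hle).trans ?_
  rw [lintegral_sub_left_eq_self (μ := volume) Φ x, hΦ, lintegral_add_right]
  · rw [lintegral_indicator measurableSet_ball, lintegral_indicator measurableSet_ball.compl,
      lintegral_const_mul' _ _ ENNReal.ofReal_ne_top, lintegral_const_mul' _ _ ENNReal.ofReal_ne_top,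
      tail_int N hN _ _ hsp hρ, near_int N hN _ _ hpsp hρ, ← ENNReal.ofReal_mul (by positivity),
      ← ENNReal.ofReal_mul (by positivity)]
  · exact ((ww_measurable _).const_mul _).indicator measurableSet_ball.compl

lemma meas_ker {N : ℕ} (p q : ℝ) (u : Euc N → ℝ) (hu : Continuous u) :
    Measurable (fun z : Euc N × Euc N => ee p (u z.1 - u z.2) * ww q (z.1 - z.2)) := by
  have := hu.measurable
  refine ((ee_measurable p).comp (by fun_prop)).mul ((ww_measurable q).comp (by fun_prop))

set_option maxHeartbeats 1000000 in
lemma poinc_s (N : ℕ) (hN : 0 < N) (p s : ℝ) (hp : 1 ≤ p) (hs : 0 < s) (hs1 : s < 1)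
    (u : Euc N → ℝ) (hu : Continuous u) (x0 : Euc N) (R : ℝ) (hR : 0 < R) :
    (∫⁻ x in ball x0 R, ∫⁻ x' in ball x0 R, ee p (u x - u x')) *
      ENNReal.ofReal (N * volume.real (ball (0 : Euc N) 1) * ((2 * R) ^ (-(s * p)) / (s * p))) ≤
    ENNReal.ofReal (2 ^ (2 * p + N)) * volume (ball x0 R) *
      ∫⁻ x in ball x0 R, ∫⁻ y, ee p (u x - u y) * ww ((N:ℝ) + s * p) (x - y) := by
  have hsp : 0 < s * p := by positivity
  set q := (N:ℝ) + s * p with hq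
  have hq0 : 0 < q := by positivity
  set T := ENNReal.ofReal (N * volume.real (ball (0 : Euc N) 1) *
    ((2 * R) ^ (-(s * p)) / (s * p))) with hT
  set F : Euc N → ℝ≥0∞ := fun x => ∫⁻ y, ee p (u x - u y) * ww q (x - y) with hF
  have hFm : Measurable F := (meas_ker p q u hu).lintegral_prod_right'
  set c := ENNReal.ofReal (2 ^ (p - 1)) * ENNReal.ofReal (2 ^ ((N:ℝ) + p)) with hc
  have hTint : T = ∫⁻ y in (ball x0 (2 * R))ᶜ, ww q (y - x0) := by
    rw [hT, ← tail_int N hN _ _ hsp (by positivity), ← lintegral_indicator measurableSet_ball.compl,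
      ← lintegral_indicator measurableSet_ball.compl,
      ← lintegral_sub_right_eq_self (μ := volume) _ x0]
    refine lintegral_congr fun y => ?_
    by_cases h : dist y x0 < 2 * R
    · rw [Set.indicator_of_notMem, Set.indicator_of_notMem]
      · simpa using h
      · simpa [← dist_eq_norm] using h
    · rw [Set.indicator_of_mem, Set.indicator_of_mem]
      · simpa using h
      · simpa [← dist_eq_norm] using h
  have hwle : ∀ x ∈ ball x0 R, ∀ y ∈ (ball x0 (2 * R))ᶜ,
      ww q (y - x0) ≤ ENNReal.ofReal (2 ^ ((N:ℝ) + p)) * ww q (x - y) := by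
    intro x hx y hy
    have hx : dist x x0 < R := hx
    have hy : 2 * R ≤ dist y x0 := by simpa using hy
    unfold ww
    rw [← ENNReal.ofReal_mul (by positivity)]
    refine ENNReal.ofReal_le_ofReal ?_
    rw [← dist_eq_norm, ← dist_eq_norm]
    have t1 : dist x y ≤ 2 * dist y x0 := by
      have := dist_triangle_right x y x0
      linarith
    have t2 : 0 < dist x y := by
      have := dist_triangle_left y x0 x
      linarith
    have t3 : (2 * dist y x0) ^ (-q) ≤ dist x y ^ (-q) :=
      Real.rpow_le_rpow_of_nonpos t2 t1 (by linarith)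
    have t4 : (dist y x0) ^ (-q) = 2 ^ q * (2 * dist y x0) ^ (-q) := by
      rw [Real.mul_rpow (by norm_num) dist_nonneg, ← mul_assoc, ← Real.rpow_add (by norm_num)]
      simp
    rw [t4]
    have t5 : (2:ℝ) ^ q ≤ 2 ^ ((N:ℝ) + p) := Real.rpow_le_rpow_of_exponent_le (by norm_num)
      (by rw [hq]; nlinarith)
    gcongr
  have key : ∀ x ∈ ball x0 R, ∀ x' ∈ ball x0 R, ee p (u x - u x') * T ≤ c * (F x + F x') := by
    intro x hx x' hx'
    have hm : ∀ x, Measurable fun y => ee p (u x - u y) * ww q (x - y) := fun x =>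
      by
      have h3 := hu.measurable
      exact ((ee_measurable p).comp (by fun_prop)).mul ((ww_measurable q).comp (by fun_prop))
    rw [hTint, hF, ← lintegral_add_left (hm x), ← lintegral_const_mul' _ _ (by simp [ee]),
      ← lintegral_const_mul' _ _ (by simp [hc, ENNReal.mul_eq_top])]
    refine (setLIntegral_mono' measurableSet_ball.compl fun y hy => ?_).trans
      (setLIntegral_le_lintegral _ _)
    have e1 : ee p (u x - u x') ≤ ENNReal.ofReal (2 ^ (p - 1)) *
        (ee p (u x - u y) + ee p (u x' - u y)) := by
      rw [ee_sub_comm p (u x') (u y)]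
      refine le_trans (le_of_eq ?_) (ee_add p hp _ _)
      congr 1; ring
    calc ee p (u x - u x') * ww q (y - x0)
        ≤ (ENNReal.ofReal (2 ^ (p - 1)) * (ee p (u x - u y) + ee p (u x' - u y)))
          * ww q (y - x0) := by gcongr
      _ = ENNReal.ofReal (2 ^ (p - 1)) * (ee p (u x - u y) * ww q (y - x0) +
          ee p (u x' - u y) * ww q (y - x0)) := by ring
      _ ≤ ENNReal.ofReal (2 ^ (p - 1)) * (ee p (u x - u y) *
          (ENNReal.ofReal (2 ^ ((N:ℝ) + p)) * ww q (x - y)) +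
          ee p (u x' - u y) * (ENNReal.ofReal (2 ^ ((N:ℝ) + p)) * ww q (x' - y))) := by
            gcongr
            · exact hwle x hx y hy
            · exact hwle x' hx' y hy
      _ = _ := by rw [hc]; ring
  have hTtop : T ≠ ⊤ := by rw [hT]; exact ENNReal.ofReal_ne_top
  have hctop : c ≠ ⊤ := by simp [hc, ENNReal.mul_eq_top]
  rw [← lintegral_mul_const' _ _ hTtop]
  calc ∫⁻ x in ball x0 R, (∫⁻ x' in ball x0 R, ee p (u x - u x')) * T
      = ∫⁻ x in ball x0 R, ∫⁻ x' in ball x0 R, ee p (u x - u x') * T := by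
        refine lintegral_congr fun x => ?_
        rw [← lintegral_mul_const' _ _ hTtop]
    _ ≤ ∫⁻ x in ball x0 R, ∫⁻ x' in ball x0 R, c * (F x + F x') := by
        refine setLIntegral_mono' measurableSet_ball fun x hx => ?_
        exact setLIntegral_mono' measurableSet_ball fun x' hx' => key x hx x' hx'
    _ = c * (2 * (volume (ball x0 R) * ∫⁻ x in ball x0 R, F x)) := by
        have : ∀ x, ∫⁻ x' in ball x0 R, c * (F x + F x') =
            c * (F x * volume (ball x0 R) + ∫⁻ x' in ball x0 R, F x') := by
          intro x
          rw [lintegral_const_mul' _ _ hctop, lintegral_add_left measurable_const]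
          simp
        simp_rw [this]
        rw [lintegral_const_mul' _ _ hctop, lintegral_add_right _ measurable_const,
          lintegral_mul_const _ hFm]
        simp; ring
    _ = _ := by
        have e2 : (2:ℝ) ^ (2 * p + (N:ℝ)) = 2 ^ (p - 1) * 2 ^ ((N:ℝ) + p) * 2 := by
          rw [← Real.rpow_add (by norm_num), ← Real.rpow_add_one (by norm_num)]
          congr 1; ring
        rw [e2, ENNReal.ofReal_mul (by positivity), ENNReal.ofReal_mul (by positivity), ← hc]
        simp; ring

lemma abstract_iter (G J : ℝ → ℝ) (q δ : ℝ) (hq : 1 ≤ q) (hδ : 0 ≤ δ)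
    (hJ0 : ∀ ρ, 0 ≤ J ρ)
    (hJm : ∀ ρ, 0 < ρ → J (ρ / 2) ≤ J ρ)
    (hG : ∀ ρ, 0 < ρ → G ρ ≤ ρ ^ q * J ρ)
    (hG2 : ∀ ρ, 0 < ρ → G ρ ≤ G (ρ / 2) + ρ ^ q * (δ * J ρ)) (ρ : ℝ) (hρ : 0 < ρ) :
    G ρ ≤ 2 * δ * ρ ^ q * J ρ := by
  have hind : ∀ k : ℕ, ∀ ρ, 0 < ρ → G ρ ≤ (2 * δ + (1 / 2) ^ k) * (ρ ^ q * J ρ) := by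
    intro k
    induction k with
    | zero =>
      intro ρ hρ
      have := hG ρ hρ
      have h2 : 0 ≤ ρ ^ q * J ρ := mul_nonneg (by positivity) (hJ0 ρ)
      simp only [pow_zero]
      nlinarith
    | succ k ih =>
      intro ρ hρ
      have h1 := hG2 ρ hρ
      have h2 := ih (ρ / 2) (by positivity)
      have h3 : (ρ / 2) ^ q * J (ρ / 2) ≤ (1 / 2) * (ρ ^ q * J ρ) := by
        have e : (ρ / 2) ^ q = (1 / 2) ^ q * ρ ^ q := by
          rw [← Real.mul_rpow (by norm_num) hρ.le]; congr 1; ring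
        have h4 : (1 / 2 : ℝ) ^ q ≤ 1 / 2 := by
          have := Real.rpow_le_rpow_of_exponent_ge (x := 1 / 2) (by norm_num) (by norm_num) hq
          simpa using this
        rw [e, mul_assoc]
        have := hJm ρ hρ
        have := hJ0 (ρ / 2)
        gcongr
      have h5 : (2 * δ + (1 / 2) ^ k) * ((ρ / 2) ^ q * J (ρ / 2)) ≤
        (2 * δ + (1 / 2) ^ k) * ((1 / 2) * (ρ ^ q * J ρ)) := by gcongr
      calc G ρ ≤ _ := h1
        _ ≤ (2 * δ + (1 / 2) ^ k) * ((1 / 2) * (ρ ^ q * J ρ)) + ρ ^ q * (δ * J ρ) := by linarith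
        _ = _ := by ring
  have ht : Tendsto (fun k : ℕ => (2 * δ + (1 / 2 : ℝ) ^ k) * (ρ ^ q * J ρ)) atTop
      (nhds ((2 * δ + 0) * (ρ ^ q * J ρ))) := by
    refine Tendsto.mul_const _ (Tendsto.const_add _ ?_)
    exact tendsto_pow_atTop_nhds_zero_of_lt_one (by norm_num) (by norm_num)
  have := ge_of_tendsto' ht (fun k => hind k ρ hρ)
  calc G ρ ≤ _ := this
    _ = _ := by ring

lemma lint_smul_two {N : ℕ} (f : Euc N → ℝ≥0∞) :
    ∫⁻ h, f h = ENNReal.ofReal (2 ^ (N : ℝ)) * ∫⁻ h, f ((2:ℝ) • h) := by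
  have e : ∫⁻ h, f ((2:ℝ) • h) = ∫⁻ h, f h ∂(Measure.map (fun h : Euc N => (2:ℝ) • h) volume) :=
    ((Homeomorph.smulOfNeZero (2:ℝ) two_ne_zero).measurableEmbedding.lintegral_map f).symm
  rw [e, show (fun h : Euc N => (2:ℝ) • h) = ((2:ℝ) • ·) from rfl,
    Measure.map_addHaar_smul volume (two_ne_zero), lintegral_smul_measure, smul_eq_mul, ← mul_assoc,
    ← ENNReal.ofReal_mul (by positivity)]
  have : (2:ℝ) ^ (N:ℝ) * |((2:ℝ) ^ Module.finrank ℝ (Euc N))⁻¹| = 1 := by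
    rw [abs_of_pos (by positivity), finrank_euclideanSpace_fin, Real.rpow_natCast]
    exact mul_inv_cancel₀ (by positivity)
  rw [this]; simp

def chi {N : ℕ} (B : Set (Euc N)) (x : Euc N) : ℝ≥0∞ := B.indicator (fun _ => 1) x

lemma chi_meas {N : ℕ} {B : Set (Euc N)} (hB : MeasurableSet B) : Measurable (chi B) :=
  measurable_const.indicator hB

lemma lint_chi {N : ℕ} {B : Set (Euc N)} (hB : MeasurableSet B) (f : Euc N → ℝ≥0∞) :
    ∫⁻ x in B, f x = ∫⁻ x, chi B x * f x := by
  rw [← lintegral_indicator hB]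
  refine lintegral_congr fun x => ?_
  by_cases h : x ∈ B <;> simp [chi, h]

def HH {N : ℕ} (p : ℝ) (B : Set (Euc N)) (u : Euc N → ℝ) (x h : Euc N) : ℝ≥0∞ :=
  chi B x * (chi B (x + h) * ee p (u (x + h) - u x))

lemma HH_meas {N : ℕ} (p : ℝ) {B : Set (Euc N)} (hB : MeasurableSet B) (u : Euc N → ℝ)
    (hu : Continuous u) : Measurable (fun z : Euc N × Euc N => HH p B u z.1 z.2) := by
  have := hu.measurable
  have h1 := chi_meas hB
  have h2 := ee_measurable p
  unfold HH
  fun_prop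

def gg {N : ℕ} (p : ℝ) (B : Set (Euc N)) (u : Euc N → ℝ) (h : Euc N) : ℝ≥0∞ :=
  ∫⁻ x, HH p B u x h

lemma gg_meas {N : ℕ} (p : ℝ) {B : Set (Euc N)} (hB : MeasurableSet B) (u : Euc N → ℝ)
    (hu : Continuous u) : Measurable (gg p B u) :=
  (HH_meas p hB u hu).lintegral_prod_left'

lemma gg_zero {N : ℕ} (p : ℝ) (hp : 1 ≤ p) (B : Set (Euc N)) (u : Euc N → ℝ) :
    gg p B u 0 = 0 := by
  simp [gg, HH, ee_zero p hp]

lemma gg_two {N : ℕ} (p : ℝ) (hp : 1 ≤ p) {B : Set (Euc N)} (hB : MeasurableSet B)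
    (hc : Convex ℝ B) (u : Euc N → ℝ) (hu : Continuous u) (h : Euc N) :
    gg p B u ((2:ℝ) • h) ≤ ENNReal.ofReal (2 ^ p) * gg p B u h := by
  have hm : Measurable fun x => HH p B u x h :=
    (HH_meas p hB u hu).comp measurable_prodMk_right
  have hle : ∀ x, HH p B u x ((2:ℝ) • h) ≤ ENNReal.ofReal (2 ^ (p - 1)) *
      (HH p B u x h + HH p B u (x + h) h) := by
    intro x
    by_cases hx : x ∈ B
    swap
    · simp [HH, chi, hx]
    by_cases hx2 : x + (2:ℝ) • h ∈ B
    swap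
    · simp [HH, chi, hx2]
    have hx1 : x + h ∈ B := by
      have := hc hx hx2 (a := 1 / 2) (b := 1 / 2) (by norm_num) (by norm_num) (by norm_num)
      convert this using 1
      rw [smul_add, smul_smul, ← add_assoc, ← add_smul]; norm_num
    have e : x + h + h = x + (2:ℝ) • h := by rw [two_smul, add_assoc]
    simp only [HH, chi, e, Set.indicator_of_mem hx, Set.indicator_of_mem hx1,
      Set.indicator_of_mem hx2, one_mul]
    rw [add_comm (ee p _)]
    refine le_trans (le_of_eq ?_) (ee_add p hp _ _)
    congr 1; ring
  calc gg p B u ((2:ℝ) • h) ≤ ∫⁻ x, ENNReal.ofReal (2 ^ (p - 1)) *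
      (HH p B u x h + HH p B u (x + h) h) := lintegral_mono hle
    _ = ENNReal.ofReal (2 ^ (p - 1)) * (gg p B u h + gg p B u h) := by
      rw [lintegral_const_mul' _ _ ENNReal.ofReal_ne_top, lintegral_add_left hm,
        lintegral_add_right_eq_self (μ := volume) (fun x => HH p B u x h) h]
      rfl
    _ = _ := by
      have : (2:ℝ) ^ p = 2 ^ (p - 1) * 2 := by
        rw [← Real.rpow_add_one (by norm_num)]; congr 1; ring
      rw [this, ENNReal.ofReal_mul (by positivity), ← two_mul, mul_assoc]; simp

lemma ww_two {N : ℕ} (q : ℝ) (h : Euc N) :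
    ww q ((2:ℝ) • h) = ENNReal.ofReal (2 ^ (-q)) * ww q h := by
  unfold ww
  rw [← ENNReal.ofReal_mul (by positivity), norm_smul, Real.mul_rpow (by positivity) (by positivity)]
  simp

def JJ {N : ℕ} (p q : ℝ) (B : Set (Euc N)) (u : Euc N → ℝ) (ρ : ℝ) : ℝ≥0∞ :=
  ∫⁻ h in ball (0 : Euc N) ρ, gg p B u h * ww q h

lemma JJ_half {N : ℕ} (p s : ℝ) (hp : 1 ≤ p) {B : Set (Euc N)} (hB : MeasurableSet B)
    (hc : Convex ℝ B) (u : Euc N → ℝ) (hu : Continuous u) (ρ : ℝ) :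
    JJ p ((N:ℝ) + s * p) B u ρ ≤
      ENNReal.ofReal (2 ^ (p - s * p)) * JJ p ((N:ℝ) + s * p) B u (ρ / 2) := by
  unfold JJ
  rw [← lintegral_indicator measurableSet_ball, ← lintegral_indicator measurableSet_ball,
    lint_smul_two, ← lintegral_const_mul' _ _ ENNReal.ofReal_ne_top,
    ← lintegral_const_mul' _ _ ENNReal.ofReal_ne_top]
  refine lintegral_mono fun h => ?_
  have hiff : (2:ℝ) • h ∈ ball (0 : Euc N) ρ ↔ h ∈ ball (0 : Euc N) (ρ / 2) := by
    simp [norm_smul, lt_div_iff₀']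
  by_cases hh : h ∈ ball (0 : Euc N) (ρ / 2)
  · rw [Set.indicator_of_mem hh, Set.indicator_of_mem (hiff.2 hh), ww_two]
    calc _ ≤ ENNReal.ofReal (2 ^ (N:ℝ)) * ((ENNReal.ofReal (2 ^ p) * gg p B u h) *
          (ENNReal.ofReal (2 ^ (-((N:ℝ) + s * p))) * ww ((N:ℝ) + s * p) h)) := by
          gcongr; exact gg_two p hp hB hc u hu h
      _ = (ENNReal.ofReal (2 ^ (N:ℝ)) * ENNReal.ofReal (2 ^ p) *
          ENNReal.ofReal (2 ^ (-((N:ℝ) + s * p)))) * (gg p B u h * ww ((N:ℝ) + s * p) h) := by ring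
      _ = _ := by
        rw [← ENNReal.ofReal_mul (by positivity), ← ENNReal.ofReal_mul (by positivity),
          ← Real.rpow_add (by norm_num), ← Real.rpow_add (by norm_num)]
        congr 3; ring
      _ ≤ _ := le_rfl
  · rw [Set.indicator_of_notMem hh, Set.indicator_of_notMem (fun h' => hh (hiff.1 h'))]
    simp

lemma mul_ww {N : ℕ} (p q : ℝ) (hp : 1 ≤ p) (hq : 0 < q) (B : Set (Euc N)) (u : Euc N → ℝ) (ρ : ℝ)
    (h : Euc N) (hh : h ∈ ball (0 : Euc N) ρ) :
    gg p B u h ≤ ENNReal.ofReal (ρ ^ q) * (gg p B u h * ww q h) := by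
  rcases eq_or_ne h 0 with rfl | h0
  · simp [gg_zero p hp]
  have hpos : 0 < ‖h‖ := norm_pos_iff.2 h0
  have hlt : ‖h‖ < ρ := by simpa using hh
  have : 1 ≤ ENNReal.ofReal (ρ ^ q) * ww q h := by
    unfold ww
    rw [← ENNReal.ofReal_mul (Real.rpow_nonneg (by linarith) _), ENNReal.one_le_ofReal,
      Real.rpow_neg hpos.le, ← div_eq_mul_inv, one_le_div (by positivity)]
    exact Real.rpow_le_rpow hpos.le hlt.le hq.le
  calc gg p B u h = gg p B u h * 1 := (mul_one _).symm
    _ ≤ gg p B u h * (ENNReal.ofReal (ρ ^ q) * ww q h) := by gcongr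
    _ = _ := by ring

lemma dbl_eq {N : ℕ} (p : ℝ) {B : Set (Euc N)} (hB : MeasurableSet B) (u : Euc N → ℝ)
    (hu : Continuous u) (k : Euc N → ℝ≥0∞) (hk : Measurable k) :
    ∫⁻ x in B, ∫⁻ y in B, ee p (u y - u x) * k (y - x) = ∫⁻ h, gg p B u h * k h := by
  have h1 : ∀ h, gg p B u h * k h = ∫⁻ x, HH p B u x h * k h := by
    intro h
    rw [gg, lintegral_mul_const]
    exact (HH_meas p hB u hu).comp measurable_prodMk_right
  simp_rw [h1]
  rw [lintegral_lintegral_swap (f := fun h x => HH p B u x h * k h), lint_chi hB]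
  · refine lintegral_congr fun x => ?_
    have h3 := hu.measurable
    have h4 := ee_measurable p
    have h5 := chi_meas hB
    rw [lint_chi hB, ← lintegral_add_left_eq_self (μ := volume) _ x, ← lintegral_const_mul]
    · refine lintegral_congr fun h => ?_
      simp only [HH, add_sub_cancel_left]
      ring
    · fun_prop
  · have : Measurable (fun z : Euc N × Euc N => HH p B u z.2 z.1 * k z.1) :=
      ((HH_meas p hB u hu).comp measurable_swap).mul (hk.comp measurable_fst)
    exact this.aemeasurable

lemma one_sub_two_rpow (x : ℝ) : 1 - (2:ℝ) ^ (-x) ≤ Real.log 2 * x := by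
  rw [Real.rpow_def_of_pos (by norm_num)]
  have := Real.add_one_le_exp (Real.log 2 * -x)
  linarith

lemma poinc_1s (N : ℕ) (hN : 0 < N) (p s : ℝ) (hp : 1 ≤ p) (hs : 0 < s) (hs1 : s < 1)
    (u : Euc N → ℝ) (hu : Continuous u) (x0 : Euc N) (R : ℝ) (hR : 0 < R)
    (hU : ∫⁻ x in ball x0 R, ∫⁻ y, ee p (u x - u y) * ww ((N:ℝ) + s * p) (x - y) ≠ ⊤) :
    ∫⁻ x in ball x0 R, ∫⁻ x' in ball x0 R, ee p (u x - u x') ≤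
    ENNReal.ofReal (2 * (p - s * p) * (2 * R) ^ ((N:ℝ) + s * p)) *
      ∫⁻ x in ball x0 R, ∫⁻ y, ee p (u x - u y) * ww ((N:ℝ) + s * p) (x - y) := by
  have hsp : 0 < s * p := by positivity
  have hpsp : 0 < p - s * p := by nlinarith
  have hN1 : (1:ℝ) ≤ N := by exact_mod_cast hN
  set q := (N:ℝ) + s * p with hq
  have hq0 : 0 < q := by positivity
  set B := ball x0 R with hB
  have hBm : MeasurableSet B := measurableSet_ball
  have hBc : Convex ℝ B := convex_ball _ _
  set U := ∫⁻ x in B, ∫⁻ y, ee p (u x - u y) * ww q (x - y) with hUd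
  set W := ∫⁻ x in B, ∫⁻ x' in B, ee p (u x - u x') with hW
  have hJU : ∀ ρ, JJ p q B u ρ ≤ U := by
    intro ρ
    refine (setLIntegral_le_lintegral _ _).trans ?_
    rw [← dbl_eq p hBm u hu _ (ww_measurable q)]
    refine lintegral_mono fun x => (setLIntegral_le_lintegral _ _).trans (le_of_eq ?_)
    refine lintegral_congr fun y => ?_
    rw [ee_sub_comm, ww_sub_comm]
  have hJtop : ∀ ρ, JJ p q B u ρ ≠ ⊤ := fun ρ => ne_top_of_le_ne_top hU (hJU ρ)
  have hGW : W = ∫⁻ h in ball (0 : Euc N) (2 * R), gg p B u h := by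
    have h1 : W = ∫⁻ h, gg p B u h * 1 := by
      rw [← dbl_eq p hBm u hu _ measurable_const]
      simp only [mul_one]
      refine lintegral_congr fun x => lintegral_congr fun y => ?_
      rw [ee_sub_comm]
    rw [h1, ← lintegral_indicator measurableSet_ball]
    refine lintegral_congr fun h => ?_
    by_cases hh : h ∈ ball (0 : Euc N) (2 * R)
    · rw [Set.indicator_of_mem hh, mul_one]
    · rw [Set.indicator_of_notMem hh, mul_one, gg]
      rw [lintegral_eq_zero_iff']
      swap
      · exact ((HH_meas p hBm u hu).comp measurable_prodMk_right).aemeasurable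
      refine Eventually.of_forall fun x => ?_
      by_cases hx : x ∈ B
      swap
      · simp [HH, chi, hx]
      by_cases hx2 : x + h ∈ B
      swap
      · simp [HH, chi, hx2]
      exfalso
      apply hh
      have a1 : dist x x0 < R := hx
      have a2 : dist (x + h) x0 < R := hx2
      have := dist_triangle_right (x + h) x x0
      have a3 : dist (x + h) x = ‖h‖ := by simp [dist_eq_norm]
      rw [mem_ball_zero_iff]
      linarith
  set δ := 1 - (2:ℝ) ^ (-(p - s * p)) with hδ
  have hδ0 : 0 ≤ δ := by
    have : (2:ℝ) ^ (-(p - s * p)) ≤ 1 := Real.rpow_le_one_of_one_le_of_nonpos (by norm_num) (by linarith)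
    linarith
  have hδ1 : δ ≤ p - s * p := by
    have := one_sub_two_rpow (p - s * p)
    have h2 := Real.log_two_lt_d9
    nlinarith
  set GE : ℝ → ℝ≥0∞ := fun ρ => ∫⁻ h in ball (0 : Euc N) ρ, gg p B u h with hGE
  have hGJ : ∀ ρ, GE ρ ≤ ENNReal.ofReal (ρ ^ q) * JJ p q B u ρ := by
    intro ρ
    rw [JJ, ← lintegral_const_mul' _ _ ENNReal.ofReal_ne_top]
    exact setLIntegral_mono' measurableSet_ball fun h hh => mul_ww p q hp hq0 B u ρ h hh
  have hGtop : ∀ ρ, GE ρ ≠ ⊤ := fun ρ => ne_top_of_le_ne_top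
    (ENNReal.mul_ne_top ENNReal.ofReal_ne_top (hJtop ρ)) (hGJ ρ)
  have hfin := abstract_iter (fun ρ => (GE ρ).toReal) (fun ρ => (JJ p q B u ρ).toReal) q δ
    (by linarith) hδ0 (fun ρ => ENNReal.toReal_nonneg) ?_ ?_ ?_ (2 * R) (by positivity)
  · have e1 : W = ENNReal.ofReal ((GE (2 * R)).toReal) := by
      rw [ENNReal.ofReal_toReal (hGtop _), hGW]
    rw [e1]
    have e2 : U = ENNReal.ofReal U.toReal := (ENNReal.ofReal_toReal hU).symm
    rw [e2, ← ENNReal.ofReal_mul (by positivity)]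
    refine ENNReal.ofReal_le_ofReal (hfin.trans ?_)
    have := ENNReal.toReal_mono hU (hJU (2 * R))
    gcongr
  · intro ρ hρ
    refine ENNReal.toReal_mono (hJtop _) ?_
    exact lintegral_mono_set (ball_subset_ball (by linarith))
  · intro ρ hρ
    have := ENNReal.toReal_mono (ENNReal.mul_ne_top ENNReal.ofReal_ne_top (hJtop ρ)) (hGJ ρ)
    rwa [ENNReal.toReal_mul, ENNReal.toReal_ofReal (by positivity)] at this
  · intro ρ hρ
    set D := ball (0 : Euc N) ρ \ ball (0 : Euc N) (ρ / 2) with hD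
    have hDm : MeasurableSet D := measurableSet_ball.diff measurableSet_ball
    have hsub : ball (0 : Euc N) (ρ / 2) ⊆ ball 0 ρ := ball_subset_ball (by linarith)
    have hsplit : ∀ f : Euc N → ℝ≥0∞, ∫⁻ h in ball (0 : Euc N) ρ, f h =
        (∫⁻ h in ball (0 : Euc N) (ρ / 2), f h) + ∫⁻ h in D, f h := by
      intro f
      rw [← lintegral_union hDm Set.disjoint_sdiff_right, hD, Set.union_sdiff_cancel hsub]
    set E := ∫⁻ h in D, gg p B u h * ww q h with hE
    have hJs : JJ p q B u ρ = JJ p q B u (ρ / 2) + E := hsplit _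
    have hEtop : E ≠ ⊤ := ne_top_of_le_ne_top (hJtop ρ) (by rw [hJs]; exact le_add_self)
    have hJsr : (JJ p q B u ρ).toReal = (JJ p q B u (ρ / 2)).toReal + E.toReal := by
      rw [hJs, ENNReal.toReal_add (hJtop _) hEtop]
    have hJh := ENNReal.toReal_mono (ENNReal.mul_ne_top ENNReal.ofReal_ne_top (hJtop (ρ / 2)))
      (JJ_half p s hp hBm hBc u hu ρ)
    rw [ENNReal.toReal_mul, ENNReal.toReal_ofReal (by positivity)] at hJh
    have hJh2 : (2:ℝ) ^ (-(p - s * p)) * (JJ p q B u ρ).toReal ≤ (JJ p q B u (ρ / 2)).toReal := by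
      have := mul_le_mul_of_nonneg_left hJh (by positivity : (0:ℝ) ≤ (2:ℝ) ^ (-(p - s * p)))
      rw [← mul_assoc, ← Real.rpow_add (by norm_num), neg_add_cancel, Real.rpow_zero, one_mul] at this
      exact this
    have hEd : E.toReal ≤ δ * (JJ p q B u ρ).toReal := by
      rw [hδ]; linarith
    have hG3 : GE ρ ≤ GE (ρ / 2) + ENNReal.ofReal (ρ ^ q) * E := by
      rw [hGE]
      simp only
      rw [hsplit, hE, ← lintegral_const_mul' _ _ ENNReal.ofReal_ne_top]
      refine add_le_add le_rfl ?_
      exact setLIntegral_mono' hDm fun h hh => mul_ww p q hp hq0 B u ρ h hh.1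
    have hG4 := ENNReal.toReal_mono (ENNReal.add_ne_top.2 ⟨hGtop _,
      ENNReal.mul_ne_top ENNReal.ofReal_ne_top hEtop⟩) hG3
    rw [ENNReal.toReal_add (hGtop _) (ENNReal.mul_ne_top ENNReal.ofReal_ne_top hEtop),
      ENNReal.toReal_mul, ENNReal.toReal_ofReal (by positivity)] at hG4
    refine hG4.trans ?_
    gcongr

lemma gag_eq {N : ℕ} (p s x : ℝ) (z : Euc N) :
    ENNReal.ofReal (|x| ^ p / ‖z‖ ^ ((N : ℝ) + s * p)) = ee p x * ww ((N : ℝ) + s * p) z := by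
  unfold ee ww
  rw [← ENNReal.ofReal_mul (by positivity), Real.rpow_neg (norm_nonneg _), div_eq_mul_inv]

lemma gag_le {N : ℕ} (p s : ℝ) (φ : Euc N → ℝ) (hφ : Continuous φ) :
    ENNReal.ofReal (gag N p s φ) ≤
      ∫⁻ x, ∫⁻ y, ee p (φ x - φ y) * ww ((N:ℝ) + s * p) (x - y) := by
  have h1 := hφ.measurable
  unfold gag
  rw [integral_eq_lintegral_of_nonneg_ae (Eventually.of_forall fun z => by positivity)
    (Measurable.aestronglyMeasurable (by fun_prop))]
  refine ENNReal.ofReal_toReal_le.trans (le_of_eq ?_)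
  simp_rw [gag_eq]
  exact lintegral_prod _ (meas_ker p _ φ hφ).aemeasurable

lemma gag_nonneg {N : ℕ} (p s : ℝ) (φ : Euc N → ℝ) : 0 ≤ gag N p s φ :=
  integral_nonneg fun z => by positivity

lemma fcap_nonneg {N : ℕ} (p s : ℝ) (A E : Set (Euc N)) : 0 ≤ fcap N p s A E := by
  refine Real.sInf_nonneg ?_
  rintro c ⟨φ, -, -, rfl⟩
  exact gag_nonneg p s φ

lemma fcap_le {N : ℕ} (p s : ℝ) (A E : Set (Euc N)) (φ : Euc N → ℝ) (h : TestOn E φ)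
    (h1 : ∀ x ∈ A, 1 ≤ φ x) : fcap N p s A E ≤ gag N p s φ := by
  refine csInf_le ⟨0, ?_⟩ ⟨φ, h, h1, rfl⟩
  rintro c ⟨φ, -, -, rfl⟩
  exact gag_nonneg p s φ

lemma sym_split {N : ℕ} (Φ : Euc N → Euc N → ℝ≥0∞)
    (hΦm : Measurable (fun z : Euc N × Euc N => Φ z.1 z.2)) (hsymm : ∀ x y, Φ x y = Φ y x)
    (B : Set (Euc N)) (hB : MeasurableSet B) (h0 : ∀ x ∉ B, ∀ y ∉ B, Φ x y = 0) :
    ∫⁻ x, ∫⁻ y, Φ x y ≤ 2 * ∫⁻ x in B, ∫⁻ y, Φ x y := by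
  have hχ := chi_meas hB
  have hle : ∀ x y, Φ x y ≤ chi B x * Φ x y + chi B y * Φ x y := by
    intro x y
    by_cases hx : x ∈ B
    · simp [chi, hx]
    by_cases hy : y ∈ B
    · simp [chi, hy]
    rw [h0 x hx y hy]; exact zero_le
  have hm1 : Measurable (fun z : Euc N × Euc N => chi B z.1 * Φ z.1 z.2) :=
    (hχ.comp measurable_fst).mul hΦm
  have hm2 : Measurable (fun z : Euc N × Euc N => chi B z.2 * Φ z.1 z.2) :=
    (hχ.comp measurable_snd).mul hΦm
  have hΦx : ∀ x, Measurable (fun y => Φ x y) := fun x => hΦm.comp measurable_prodMk_left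
  have hS1 : ∫⁻ x, ∫⁻ y, chi B x * Φ x y = ∫⁻ x in B, ∫⁻ y, Φ x y := by
    rw [lint_chi hB]
    exact lintegral_congr fun x => lintegral_const_mul _ (hΦx x)
  have hS2 : ∫⁻ x, ∫⁻ y, chi B y * Φ x y = ∫⁻ x in B, ∫⁻ y, Φ x y := by
    rw [lintegral_lintegral_swap hm2.aemeasurable, ← hS1]
    refine lintegral_congr fun x => lintegral_congr fun y => ?_
    rw [hsymm]
  calc ∫⁻ x, ∫⁻ y, Φ x y ≤ ∫⁻ x, ∫⁻ y, (chi B x * Φ x y + chi B y * Φ x y) :=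
        lintegral_mono fun x => lintegral_mono fun y => hle x y
    _ = (∫⁻ x, ∫⁻ y, chi B x * Φ x y) + ∫⁻ x, ∫⁻ y, chi B y * Φ x y := by
        rw [← lintegral_add_left hm1.lintegral_prod_right']
        refine lintegral_congr fun x => ?_
        rw [lintegral_add_left ((hΦx x).const_mul _)]
    _ = 2 * ∫⁻ x in B, ∫⁻ y, Φ x y := by rw [hS1, hS2, two_mul]

lemma cut_half {N : ℕ} (p q : ℝ) (hp : 1 ≤ p) (u η : Euc N → ℝ) (hu : Continuous u)
    (B : Set (Euc N))
    (h1 : ∀ x, |η x| ≤ 1) (K : ℝ≥0∞) (hK : ∀ x, ∫⁻ y, ee p (η x - η y) * ww q (x - y) ≤ K) (c : ℝ) :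
    ∫⁻ x in B, ∫⁻ y, ee p (η x * (c - u x) - η y * (c - u y)) * ww q (x - y) ≤ ENNReal.ofReal (2 ^ (p - 1)) *
      ((∫⁻ x in B, ∫⁻ y, ee p (u x - u y) * ww q (x - y)) + K * ∫⁻ x in B, ee p (u x - c)) := by
  have hmu : ∀ x, Measurable fun y => ee p (u x - u y) * ww q (x - y) := fun x =>
    by
    have h3 := hu.measurable
    exact ((ee_measurable p).comp (by fun_prop)).mul ((ww_measurable q).comp (by fun_prop))
  have hFm : Measurable fun x => ∫⁻ y, ee p (u x - u y) * ww q (x - y) :=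
    (meas_ker p q u hu).lintegral_prod_right'
  have hec : Measurable fun x => ee p (u x - c) :=
    (ee_measurable p).comp (by have := hu.measurable; fun_prop)
  rw [← lintegral_const_mul _ hec, ← lintegral_add_left hFm,
    ← lintegral_const_mul' _ _ ENNReal.ofReal_ne_top]
  refine lintegral_mono fun x => ?_
  calc ∫⁻ y, ee p (η x * (c - u x) - η y * (c - u y)) * ww q (x - y) ≤ ∫⁻ y, ENNReal.ofReal (2 ^ (p - 1)) * (ee p (u x - u y) * ww q (x - y) +
        ee p (u x - c) * (ee p (η x - η y) * ww q (x - y))) := by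
        refine lintegral_mono fun y => ?_
        have e1 : η x * (c - u x) - η y * (c - u y) =
          η y * (u y - u x) + (c - u x) * (η x - η y) := by ring
        have e2 : ee p (η y * (u y - u x)) ≤ ee p (u x - u y) := by
          rw [ee_sub_comm p (u x)]
          apply ee_mono p hp
          rw [abs_mul]
          exact mul_le_of_le_one_left (abs_nonneg _) (h1 y)
        calc _ ≤ (ENNReal.ofReal (2 ^ (p - 1)) * (ee p (η y * (u y - u x)) +
            ee p ((c - u x) * (η x - η y)))) * ww q (x - y) := by
              rw [e1]; gcongr; exact ee_add p hp _ _
          _ ≤ (ENNReal.ofReal (2 ^ (p - 1)) * (ee p (u x - u y) +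
            ee p (u x - c) * ee p (η x - η y))) * ww q (x - y) := by
              rw [ee_mul p (c - u x), ee_sub_comm p c]; gcongr
          _ = _ := by ring
    _ = ENNReal.ofReal (2 ^ (p - 1)) * ((∫⁻ y, ee p (u x - u y) * ww q (x - y)) +
        ee p (u x - c) * ∫⁻ y, (ee p (η x - η y) * ww q (x - y))) := by
        rw [lintegral_const_mul' _ _ ENNReal.ofReal_ne_top, lintegral_add_left (hmu x),
          lintegral_const_mul' _ _ (by simp [ee])]
    _ ≤ ENNReal.ofReal (2 ^ (p - 1)) * ((∫⁻ y, ee p (u x - u y) * ww q (x - y)) +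
        K * ee p (u x - c)) := by
        rw [mul_comm K]; gcongr; exact hK x

lemma cut_bound {N : ℕ} (p q : ℝ) (hp : 1 ≤ p) (u η : Euc N → ℝ) (hu : Continuous u)
    (hη : Continuous η) (B : Set (Euc N)) (hB : MeasurableSet B) (h0 : ∀ x ∉ B, η x = 0)
    (h1 : ∀ x, |η x| ≤ 1) (K : ℝ≥0∞) (hK : ∀ x, ∫⁻ y, ee p (η x - η y) * ww q (x - y) ≤ K) (c : ℝ) :
    ∫⁻ x, ∫⁻ y, ee p (η x * (c - u x) - η y * (c - u y)) * ww q (x - y) ≤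
      ENNReal.ofReal (2 ^ p) * ((∫⁻ x in B, ∫⁻ y, ee p (u x - u y) * ww q (x - y)) +
        K * ∫⁻ x in B, ee p (u x - c)) := by
  refine (sym_split (fun x y => ee p (η x * (c - u x) - η y * (c - u y)) * ww q (x - y))
    (meas_ker p q (fun x => η x * (c - u x)) (by fun_prop)) ?_ B hB ?_).trans ?_
  · intro x y
    show ee p _ * ww q _ = ee p _ * ww q _
    rw [ee_sub_comm, ww_sub_comm]
  · intro x hx y hy
    show ee p _ * ww q _ = 0
    rw [h0 x hx, h0 y hy, zero_mul, zero_mul, sub_zero, ee_zero p hp, zero_mul]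
  · refine (mul_le_mul_right (cut_half p q hp u η hu B h1 K hK c) 2).trans (le_of_eq ?_)
    have h2 : (2:ℝ) ^ p = 2 * 2 ^ (p - 1) := by
      rw [mul_comm, ← Real.rpow_add_one (by norm_num)]; congr 1; ring
    have h3 : ENNReal.ofReal (2 ^ p) = 2 * ENNReal.ofReal (2 ^ (p - 1)) := by
      rw [h2, ENNReal.ofReal_mul (by norm_num)]; simp
    rw [h3, mul_assoc]

lemma exists_eta (N : ℕ) (t : ℝ) (ht : 1 < t) : ∃ L : ℝ, 0 ≤ L ∧
    ∀ (x0 : Euc N) (r R : ℝ), 0 < r → R = t * r → ∃ η : Euc N → ℝ,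
      TestOn (ball x0 R) η ∧ (∀ x, 0 ≤ η x) ∧ (∀ x, η x ≤ 1) ∧ (∀ x ∈ closedBall x0 r, η x = 1) ∧
      ∀ x y, |η x - η y| ≤ L / r * ‖x - y‖ := by
  let f : ContDiffBump (0 : Euc N) := ⟨1, (1 + t) / 2, one_pos, by linarith⟩
  have hfc : ContDiff ℝ (⊤ : ℕ∞) f := f.contDiff
  obtain ⟨L, hL⟩ := hfc.lipschitzWith_of_hasCompactSupport f.hasCompactSupport (by simp)
  refine ⟨L, L.2, fun x0 r R hr hR => ?_⟩
  have hsupp : Function.support (fun x => f (r⁻¹ • (x - x0))) ⊆ closedBall x0 (r * ((1 + t) / 2)) := by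
    intro x hx
    have h2 : r⁻¹ • (x - x0) ∈ Function.support f := hx
    rw [f.support_eq, mem_ball_zero_iff, norm_smul, norm_inv, Real.norm_of_nonneg hr.le,
      inv_mul_lt_iff₀ hr] at h2
    rw [mem_closedBall, dist_eq_norm]
    exact h2.le
  refine ⟨fun x => f (r⁻¹ • (x - x0)), ⟨?_, ?_, ?_⟩, fun x => f.nonneg, fun x => f.le_one, ?_, ?_⟩
  · exact hfc.comp (by fun_prop)
  · exact HasCompactSupport.of_support_subset_isCompact (isCompact_closedBall _ _) hsupp
  · refine (closure_minimal hsupp isClosed_closedBall).trans (closedBall_subset_ball ?_)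
    rw [hR]; nlinarith
  · intro x hx
    apply f.one_of_mem_closedBall
    rw [mem_closedBall_zero_iff, norm_smul, norm_inv, Real.norm_of_nonneg hr.le,
      inv_mul_le_iff₀ hr, ← dist_eq_norm]
    simpa [f] using hx
  · intro x y
    have := hL.dist_le_mul (r⁻¹ • (x - x0)) (r⁻¹ • (y - x0))
    rw [Real.dist_eq, dist_eq_norm, ← smul_sub, sub_sub_sub_cancel_right, norm_smul, norm_inv,
      Real.norm_of_nonneg hr.le] at this
    refine this.trans (le_of_eq ?_)
    ring

lemma cap_point {N : ℕ} (p s : ℝ) (hp : 1 ≤ p) (u η : Euc N → ℝ)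
    (hu : ContDiff ℝ (⊤ : ℕ∞) u) (A B : Set (Euc N)) (hB : MeasurableSet B) (hη : TestOn B η)
    (h1 : ∀ x, |η x| ≤ 1) (hA : ∀ x ∈ A, η x = 1) (huA : ∀ x ∈ A, u x = 0)
    (K : ℝ≥0∞)
    (hK : ∀ x, ∫⁻ y, ee p (η x - η y) * ww ((N:ℝ) + s * p) (x - y) ≤ K) (c : ℝ) :
    ENNReal.ofReal (fcap N p s A B) * ee p c ≤
      ENNReal.ofReal (2 ^ p) *
        ((∫⁻ x in B, ∫⁻ y, ee p (u x - u y) * ww ((N:ℝ) + s * p) (x - y)) +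
        K * ∫⁻ x in B, ee p (u x - c)) := by
  rcases eq_or_ne c 0 with rfl | hc
  · simp [ee_zero p hp]
  have hηc := hη.1
  have h0 : ∀ x ∉ B, η x = 0 := fun x hx => by
    by_contra h
    exact hx (hη.2.2 (subset_tsupport _ h))
  set ψ : Euc N → ℝ := η * (fun x => 1 - u x / c) with hψ
  have hψT : TestOn B ψ := by
    refine ⟨?_, hη.2.1.mul_right, (tsupport_mul_subset_left).trans hη.2.2⟩
    exact hηc.mul (contDiff_const.sub (hu.div_const c))
  have hle : ENNReal.ofReal (fcap N p s A B) ≤ ENNReal.ofReal (gag N p s ψ) :=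
    ENNReal.ofReal_le_ofReal (fcap_le p s A B ψ hψT fun x hx => by simp [hψ, hA x hx, huA x hx])
  refine le_trans ?_ (cut_bound p _ hp u η hu.continuous hηc.continuous B hB h0 h1 K hK c)
  refine (mul_le_mul_left (hle.trans (gag_le p s ψ hψT.1.continuous)) _).trans (le_of_eq ?_)
  have htop : ee p c ≠ ⊤ := by simp [ee]
  rw [← lintegral_mul_const' _ _ htop]
  refine lintegral_congr fun x => ?_
  rw [← lintegral_mul_const' _ _ htop]
  refine lintegral_congr fun y => ?_
  rw [mul_right_comm, ← ee_mul]
  congr 2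
  simp only [hψ, Pi.mul_apply]
  field_simp

/-- The constant. -/
def CC (N : ℕ) (p L t : ℝ) : ℝ :=
  2 ^ p * (volume.real (ball (0 : Euc N) 1) +
    (2 * L ^ p * (N * volume.real (ball (0 : Euc N) 1)) * (2 * t) ^ (N : ℝ) * (2 * t) ^ p +
     (2 * t) ^ p * 2 ^ (2 * p + N) * (volume.real (ball (0 : Euc N) 1) * t ^ (N : ℝ))))

lemma vol_ball {N : ℕ} (x0 : Euc N) (r : ℝ) (hr : 0 < r) :
    volume (ball x0 r) = ENNReal.ofReal (volume.real (ball (0 : Euc N) 1) * r ^ (N:ℝ)) := by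
  rw [Measure.addHaar_ball_of_pos volume x0 hr, finrank_euclideanSpace_fin, mul_comm,
    ENNReal.ofReal_mul (by positivity), Real.rpow_natCast]
  congr 1
  rw [Measure.real, ENNReal.ofReal_toReal measure_ball_lt_top.ne]

lemma main_enn (N : ℕ) (hN : 0 < N) (p : ℝ) (hp : 1 ≤ p) (t : ℝ) (ht : 1 < t) (L : ℝ) (hL : 0 ≤ L)
    (s : ℝ) (hs : 0 < s) (hs1 : s < 1) (x0 : Euc N) (r R : ℝ) (hr : 0 < r) (hR : R = t * r)
    (A : Set (Euc N)) (hA : A ⊆ closedBall x0 r) (η : Euc N → ℝ) (hη : TestOn (ball x0 R) η)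
    (hη0 : ∀ x, 0 ≤ η x) (hη1 : ∀ x, η x ≤ 1) (hηA : ∀ x ∈ closedBall x0 r, η x = 1)
    (hηL : ∀ x y, |η x - η y| ≤ L / r * ‖x - y‖)
    (u : Euc N → ℝ) (hu : ContDiff ℝ (⊤ : ℕ∞) u) (huA : ∀ x ∈ A, u x = 0)
    (hU : ∫⁻ x in ball x0 R, ∫⁻ y, ee p (u x - u y) * ww ((N:ℝ) + s * p) (x - y) ≠ ⊤) :
    ENNReal.ofReal (fcap N p s A (ball x0 R)) * ∫⁻ x in ball x0 r, ee p (u x) ≤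
      ENNReal.ofReal (CC N p L t * r ^ (N:ℝ)) *
      ∫⁻ x in ball x0 R, ∫⁻ y, ee p (u x - u y) * ww ((N:ℝ) + s * p) (x - y) := by
  have hsp : 0 < s * p := by positivity
  have hpsp : 0 < p - s * p := by nlinarith
  have hR0 : 0 < R := by rw [hR]; positivity
  have hrR : r ≤ R := by rw [hR]; nlinarith
  have hKb := kernel_bound N hN p s hp hs hs1 η 1 (L / r) r zero_le_one (by positivity) hr
    (fun x y => by
      have := hη0 x; have := hη1 x; have := hη0 y; have := hη1 y
      rw [abs_le]; constructor <;> linarith) hηL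
  have hW1 := poinc_1s N hN p s hp hs hs1 u hu.continuous x0 R hR0 hU
  have hW2 := poinc_s N hN p s hp hs hs1 u hu.continuous x0 R hR0
  have hcap := cap_point p s hp u η hu A (ball x0 R) measurableSet_ball hη
    (fun x => by rw [abs_of_nonneg (hη0 x)]; exact hη1 x) (fun x hx => hηA x (hA hx)) huA _ hKb
  set ω := volume.real (ball (0 : Euc N) 1) with hω
  have hω0 : 0 ≤ ω := measureReal_nonneg
  set U := ∫⁻ x in ball x0 R, ∫⁻ y, ee p (u x - u y) * ww ((N:ℝ) + s * p) (x - y) with hUd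
  set W := ∫⁻ x in ball x0 R, ∫⁻ x' in ball x0 R, ee p (u x - u x') with hW
  set K1 := (L / r) ^ p * (N * ω * (r ^ (p - s * p) / (p - s * p))) with hK1
  set K2 := (1:ℝ) ^ p * (N * ω * (r ^ (-(s * p)) / (s * p))) with hK2
  set T := N * ω * ((2 * R) ^ (-(s * p)) / (s * p)) with hT
  have hWr : ∫⁻ x' in ball x0 r, ∫⁻ x in ball x0 R, ee p (u x - u x') ≤ W := by
    refine (lintegral_mono_set (ball_subset_ball hrR)).trans (le_of_eq ?_)
    refine lintegral_congr fun x => lintegral_congr fun y => ?_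
    rw [ee_sub_comm]
  have h2t : 1 ≤ 2 * t := by linarith
  have htp : (2 * t) ^ (s * p) ≤ (2 * t) ^ p :=
    Real.rpow_le_rpow_of_exponent_le h2t (by nlinarith)
  have h2R : 2 * R = (2 * t) * r := by rw [hR]; ring
  have hKW1 : ENNReal.ofReal K1 * W ≤
      ENNReal.ofReal (2 * L ^ p * (N * ω) * (2 * t) ^ (N : ℝ) * (2 * t) ^ p * r ^ (N:ℝ)) * U := by
    refine (mul_le_mul_right hW1 _).trans ?_
    rw [← mul_assoc, ← ENNReal.ofReal_mul (by positivity)]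
    refine mul_le_mul_left (ENNReal.ofReal_le_ofReal ?_) _
    have e1 : (2 * R) ^ ((N:ℝ) + s * p) =
        (2 * t) ^ (N:ℝ) * (2 * t) ^ (s * p) * (r ^ (N:ℝ) * r ^ (s * p)) := by
      rw [h2R, Real.mul_rpow (by positivity) hr.le, Real.rpow_add (by positivity), Real.rpow_add hr]
    have e2 : (L / r) ^ p * r ^ (p - s * p) * r ^ (s * p) = L ^ p := by
      rw [mul_assoc, ← Real.rpow_add hr, sub_add_cancel, ← Real.mul_rpow (by positivity) hr.le,
        div_mul_cancel₀ _ hr.ne']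
    calc K1 * (2 * (p - s * p) * (2 * R) ^ ((N:ℝ) + s * p))
        = 2 * ((L / r) ^ p * r ^ (p - s * p) * r ^ (s * p)) * (N * ω) * (2 * t) ^ (N:ℝ) *
          (2 * t) ^ (s * p) * r ^ (N:ℝ) := by
          rw [hK1, e1]
          have hd : (p - s * p) / (p - s * p) = 1 := div_self hpsp.ne'
          generalize p - s * p = d at hd
          generalize r ^ d = rd
          rw [div_eq_mul_inv] at hd
          linear_combination (2 * ((L / r) ^ p * rd * r ^ (s * p)) * (N * ω) * (2 * t) ^ (N:ℝ) *
            (2 * t) ^ (s * p) * r ^ (N:ℝ)) * hd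
      _ ≤ _ := by rw [e2]; gcongr
  have hKW2 : ENNReal.ofReal K2 * W ≤
      ENNReal.ofReal ((2 * t) ^ p * 2 ^ (2 * p + N) * (ω * t ^ (N:ℝ)) * r ^ (N:ℝ)) * U := by
    have e1 : K2 = (2 * t) ^ (s * p) * T := by
      rw [hK2, hT, h2R, Real.mul_rpow (by positivity) hr.le]
      have : (2 * t) ^ (s * p) * (2 * t) ^ (-(s * p)) = 1 := by
        rw [← Real.rpow_add (by positivity)]; simp
      rw [Real.one_rpow]
      calc _ = ((2 * t) ^ (s * p) * (2 * t) ^ (-(s * p))) *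
          (N * ω * (r ^ (-(s * p)) / (s * p))) := by rw [this]
        _ = _ := by ring
    rw [e1, ENNReal.ofReal_mul (by positivity), mul_assoc, mul_comm _ W]
    refine (mul_le_mul_right hW2 _).trans ?_
    rw [vol_ball x0 R hR0, ← hω, ← mul_assoc, ← ENNReal.ofReal_mul (by positivity),
      ← ENNReal.ofReal_mul (by positivity)]
    refine mul_le_mul_left (ENNReal.ofReal_le_ofReal ?_) _
    rw [hR, Real.mul_rpow (by positivity) hr.le]
    calc _ = (2 * t) ^ (s * p) * 2 ^ (2 * p + (N:ℝ)) * (ω * t ^ (N:ℝ)) * r ^ (N:ℝ) := by ring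
      _ ≤ _ := by gcongr
  have hKtop : ENNReal.ofReal K1 + ENNReal.ofReal K2 ≠ ⊤ := by simp
  rw [← lintegral_const_mul' _ _ ENNReal.ofReal_ne_top]
  calc _ ≤ ∫⁻ x' in ball x0 r, ENNReal.ofReal (2 ^ p) * (U + (ENNReal.ofReal K1 + ENNReal.ofReal K2) *
        ∫⁻ x in ball x0 R, ee p (u x - u x')) := lintegral_mono fun x' => hcap (u x')
    _ = ENNReal.ofReal (2 ^ p) * (U * volume (ball x0 r) + (ENNReal.ofReal K1 + ENNReal.ofReal K2) *
        ∫⁻ x' in ball x0 r, ∫⁻ x in ball x0 R, ee p (u x - u x')) := by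
        rw [lintegral_const_mul' _ _ ENNReal.ofReal_ne_top, lintegral_add_left measurable_const,
          lintegral_const_mul' _ _ hKtop]
        simp
    _ ≤ ENNReal.ofReal (2 ^ p) * (U * volume (ball x0 r) +
        (ENNReal.ofReal K1 * W + ENNReal.ofReal K2 * W)) := by
        rw [← add_mul]; gcongr
    _ ≤ ENNReal.ofReal (2 ^ p) * (U * ENNReal.ofReal (ω * r ^ (N:ℝ)) +
        (ENNReal.ofReal (2 * L ^ p * (N * ω) * (2 * t) ^ (N : ℝ) * (2 * t) ^ p * r ^ (N:ℝ)) * U +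
         ENNReal.ofReal ((2 * t) ^ p * 2 ^ (2 * p + N) * (ω * t ^ (N:ℝ)) * r ^ (N:ℝ)) * U)) := by
        rw [vol_ball x0 r hr]; gcongr
    _ = _ := by
        have : CC N p L t * r ^ (N:ℝ) = 2 ^ p * (ω * r ^ (N:ℝ) +
          (2 * L ^ p * (N * ω) * (2 * t) ^ (N : ℝ) * (2 * t) ^ p * r ^ (N:ℝ) +
          (2 * t) ^ p * 2 ^ (2 * p + N) * (ω * t ^ (N:ℝ)) * r ^ (N:ℝ))) := by
          rw [CC]; ring
        rw [this, ENNReal.ofReal_mul (p := 2 ^ p) (by positivity), ENNReal.ofReal_add (by positivity) (by positivity),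
          ENNReal.ofReal_add (by positivity) (by positivity)]
        ring

lemma CC_pos (N : ℕ) (p L t : ℝ) (hL : 0 ≤ L) (ht : 1 < t) : 0 < CC N p L t := by
  have : 0 < volume.real (ball (0 : Euc N) 1) := by
    rw [Measure.real]
    exact ENNReal.toReal_pos (measure_ball_pos _ _ one_pos).ne' measure_ball_lt_top.ne
  unfold CC
  positivity

lemma test_bounds {N : ℕ} (u : Euc N → ℝ) (hu : TestOn Set.univ u) : ∃ b L : ℝ, 0 ≤ b ∧ 0 ≤ L ∧
    (∀ x y, |u x - u y| ≤ b) ∧ (∀ x y, |u x - u y| ≤ L * ‖x - y‖) := by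
  obtain ⟨L, hL⟩ := hu.1.lipschitzWith_of_hasCompactSupport hu.2.1 (by simp)
  obtain ⟨C, hC⟩ := hu.2.1.exists_bound_of_continuous hu.1.continuous
  refine ⟨C + C, L, ?_, L.2, fun x y => ?_, fun x y => ?_⟩
  · have := (norm_nonneg _).trans (hC 0); linarith
  · exact (abs_sub _ _).trans (add_le_add (hC x) (hC y))
  · have := hL.dist_le_mul x y
    rwa [Real.dist_eq, dist_eq_norm] at this

end helpers

theorem stmt15 (N : ℕ) (hN : 0 < N) (p : ℝ) (hp : 1 ≤ p) :
    ∃ M : ℝ → ℝ, (∀ t, 1 < t → 0 < M t) ∧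
      ∀ s : ℝ, 0 < s → s < 1 → ∀ (x0 : Euc N) (r R : ℝ), 0 < r → r < R →
        ∀ A : Set (Euc N), IsCompact A → A ⊆ closedBall x0 r →
          ∀ u : Euc N → ℝ, TestOn (Set.univ : Set (Euc N)) u → (∀ x ∈ A, u x = 0) →
            M (R / r) / r ^ ((N : ℝ) / p) * (fcap N p s A (ball x0 R)) ^ (1 / p) *
                (∫ x in ball x0 r, |u x| ^ p) ^ (1 / p) ≤
              (∫ x in ball x0 R, ∫ y, |u x - u y| ^ p / ‖x - y‖ ^ ((N : ℝ) + s * p)) ^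
                (1 / p) := by
  have hex := fun (t : ℝ) (ht : 1 < t) => exists_eta N t ht
  choose L hL0 hL using hex
  refine ⟨fun t => if ht : 1 < t then (CC N p (L t ht) t) ^ (-(1 / p)) else 1, ?_, ?_⟩
  · intro t ht
    simp only [ht, dif_pos]
    exact Real.rpow_pos_of_pos (CC_pos N p _ t (hL0 t ht) ht) _
  intro s hs hs1 x0 r R hr hrR A hAc hA u hu huA
  have ht : 1 < R / r := (one_lt_div hr).2 hrR
  have hR : R = R / r * r := (div_mul_cancel₀ _ hr.ne').symm
  simp only [ht, dif_pos]
  obtain ⟨η, hη, hη0, hη1, hηA, hηL⟩ := hL (R / r) ht x0 r R hr hR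
  set C := CC N p (L (R / r) ht) (R / r) with hC
  have hCpos : 0 < C := CC_pos N p _ _ (hL0 _ ht) ht
  obtain ⟨b, L', hb, hL', hub, huL⟩ := test_bounds u hu
  have hKb := kernel_bound N hN p s hp hs hs1 u b L' 1 hb hL' one_pos hub huL
  set F : Euc N → ℝ≥0∞ := fun x => ∫⁻ y, ee p (u x - u y) * ww ((N:ℝ) + s * p) (x - y) with hF
  have hFm : Measurable F := (meas_ker p _ u hu.1.continuous).lintegral_prod_right'
  have hFtop : ∀ x, F x < ⊤ := fun x => (hKb x).trans_lt
    (ENNReal.add_lt_top.2 ⟨ENNReal.ofReal_lt_top, ENNReal.ofReal_lt_top⟩)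
  have hUtop : ∫⁻ x in ball x0 R, F x ≠ ⊤ := by
    refine ne_top_of_le_ne_top ?_ (lintegral_mono fun x => hKb x)
    rw [lintegral_const]
    refine ENNReal.mul_ne_top (ENNReal.add_ne_top.2 ⟨ENNReal.ofReal_ne_top, ENNReal.ofReal_ne_top⟩) ?_
    rw [Measure.restrict_apply_univ]
    exact measure_ball_lt_top.ne
  have hum := hu.1.continuous.measurable
  have hX : ∫ x in ball x0 R, ∫ y, |u x - u y| ^ p / ‖x - y‖ ^ ((N : ℝ) + s * p) =
      (∫⁻ x in ball x0 R, F x).toReal := by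
    rw [← integral_toReal hFm.aemeasurable (Eventually.of_forall hFtop)]
    refine integral_congr_ae (Eventually.of_forall fun x => ?_)
    simp only
    rw [integral_eq_lintegral_of_nonneg_ae (Eventually.of_forall fun z => by positivity)
      (Measurable.aestronglyMeasurable (by fun_prop))]
    simp_rw [gag_eq]
    rfl
  have hI : ∫ x in ball x0 r, |u x| ^ p = (∫⁻ x in ball x0 r, ee p (u x)).toReal := by
    rw [integral_eq_lintegral_of_nonneg_ae (Eventually.of_forall fun z => by positivity)
      (Measurable.aestronglyMeasurable (by fun_prop))]
    rfl
  have hmain := main_enn N hN p hp (R / r) ht _ (hL0 _ ht) s hs hs1 x0 r R hr hR A hA η hη hη0 hη1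
    hηA hηL u hu.1 huA hUtop
  have hreal := ENNReal.toReal_mono (ENNReal.mul_ne_top ENNReal.ofReal_ne_top hUtop) hmain
  rw [ENNReal.toReal_mul, ENNReal.toReal_mul, ENNReal.toReal_ofReal (fcap_nonneg _ _ _ _),
    ENNReal.toReal_ofReal (by positivity), ← hI, ← hC] at hreal
  rw [hX]
  have hcap0 := fcap_nonneg p s A (ball x0 R)
  set cap := fcap N p s A (ball x0 R)
  have hI0 : 0 ≤ ∫ x in ball x0 r, |u x| ^ p := integral_nonneg fun x => by positivity
  set I := ∫ x in ball x0 r, |u x| ^ p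
  set X := (∫⁻ x in ball x0 R, F x).toReal
  have hrN : 0 < r ^ (N:ℝ) := by positivity
  have hp0 : 0 < p := by linarith
  have e1 : C ^ (-(1 / p)) / r ^ ((N:ℝ) / p) * cap ^ (1 / p) * I ^ (1 / p) =
      (C⁻¹ * (r ^ (N:ℝ))⁻¹ * cap * I) ^ (1 / p) := by
    rw [Real.mul_rpow (by positivity) hI0, Real.mul_rpow (by positivity) hcap0,
      Real.mul_rpow (by positivity) (by positivity), Real.inv_rpow hCpos.le,
      Real.inv_rpow hrN.le, Real.rpow_neg hCpos.le, ← Real.rpow_mul hr.le, div_eq_mul_inv,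
      mul_one_div]
  rw [e1]
  refine Real.rpow_le_rpow (by positivity) ?_ (by positivity)
  calc C⁻¹ * (r ^ (N:ℝ))⁻¹ * cap * I = (C * r ^ (N:ℝ))⁻¹ * (cap * I) := by
        rw [mul_inv]; ring
    _ ≤ (C * r ^ (N:ℝ))⁻¹ * (C * r ^ (N:ℝ) * X) := by gcongr
    _ = X := inv_mul_cancel_left₀ (by positivity) _
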